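/- Let d, N ≥ 1, let A and B be d×d real matrices with A symmetric, and let α : ℝ → ℝ. Let W : ℝ × ℝ^d → ℝ^d be continuously differentiable, with spatial Jacobian J(t, x), and let X₁, …, X_N : ℝ → ℝ^d be differentiable curves. Define S(t, x) = Σ_{j=1}^N exp(⟨X_j(t), A x⟩), M_{ij}(t) = exp(⟨X_i(t), A X_j(t)⟩), D_i(t) = Σ_{k=1}^N M_{ik}(t), and ‖v‖²_B = ⟨v, B v⟩. Suppose X_i'(t) = N B W(t, X_i(t)) / D_i(t) for all i and t, and that for all t ∈ ℝ and x ∈ ℝ^d: ∂_t W(t, x) = −α(t) W(t, x) − J(t, x) ( N B W(t, x) / S(t, x) ) + (N / (2 S(t, x)²)) ‖W(t, x)‖²_B Σ_{j=1}^N exp(⟨X_j(t), A x⟩) A X_j(t) + (N/2) Σ_{j=1}^N exp(⟨X_j(t), A x⟩) ( ‖W(t, X_j(t))‖²_B / D_j(t)² + 2 ) A X_j(t). Then the curves Y_i(t) := W(t, X_i(t)) are differentiable and satisfy Y_i'(t) = −α(t) Y_i(t) + (N/2) Σ_{j=1}^N M_{ij}(t) ( ‖Y_i(t)‖²_B / D_i(t)²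 + ‖Y_j(t)‖²_B / D_j(t)² + 2 ) A X_j(t) for all i and t. -/

import Mathlib

open MeasureTheory Real Matrix
open scoped RealInnerProductSpace

noncomputable section

/-- Matrix–vector multiplication on Euclidean space. -/
def mv {d : ℕ} (A : Matrix (Fin d) (Fin d) ℝ) (x : EuclideanSpace ℝ (Fin d)) :
    EuclideanSpace ℝ (Fin d) := Matrix.toEuclideanLin A x

/-- `S(t, x) = Σ_j exp(⟨X_j(t), A x⟩)`. -/
def Sfun {d N : ℕ} (A : Matrix (Fin d) (Fin d) ℝ)
    (X : Fin N → ℝ → EuclideanSpace ℝ (Fin d)) (t : ℝ)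
    (x : EuclideanSpace ℝ (Fin d)) : ℝ :=
  ∑ j : Fin N, Real.exp ⟪X j t, mv A x⟫

/-- `M_{ij}(t) = exp(⟨X_i(t), A X_j(t)⟩)`. -/
def Mfun {d N : ℕ} (A : Matrix (Fin d) (Fin d) ℝ)
    (X : Fin N → ℝ → EuclideanSpace ℝ (Fin d)) (i j : Fin N) (t : ℝ) : ℝ :=
  Real.exp ⟪X i t, mv A (X j t)⟫

/-- `D_i(t) = Σ_k M_{ik}(t)`. -/
def Dfun {d N : ℕ} (A : Matrix (Fin d) (Fin d) ℝ)
    (X : Fin N → ℝ → EuclideanSpace ℝ (Fin d)) (i : Fin N) (t : ℝ) : ℝ :=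
  ∑ k : Fin N, Mfun A X i k t

/-- `‖v‖²_B = ⟨v, B v⟩`. -/
def nB {d : ℕ} (B : Matrix (Fin d) (Fin d) ℝ) (v : EuclideanSpace ℝ (Fin d)) : ℝ :=
  ⟪v, mv B v⟫

/-!
Since `A` is symmetric, `S(t, X_i(t)) = D_i(t)`. Hence `X_i` is a characteristic of the transport
term in the equation for `W`: by the chain rule the derivative of `W(t, X_i(t))` adds
`J(t, X_i(t)) X_i'(t)` to `∂_t W(t, X_i(t))`, which cancels that term, and the two remaining
force sums merge.
-/

section ChainRule

variable {𝕜 E F : Type*} [NontriviallyNormedField 𝕜] [NormedAddCommGroup E] [NormedSpace 𝕜 E]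
  [NormedAddCommGroup F] [NormedSpace 𝕜 F]

theorem fderiv_apply_one_prodMk {f : 𝕜 × E → F} {t : 𝕜} {x : E}
    (hf : DifferentiableAt 𝕜 f (t, x)) (v : E) :
    fderiv 𝕜 f (t, x) (1, v) =
      deriv (fun s => f (s, x)) t + fderiv 𝕜 (fun y => f (t, y)) x v := by
  have time_deriv : HasDerivAt (fun s => f (s, x)) (fderiv 𝕜 f (t, x) (1, 0)) t :=
    hf.hasFDerivAt.comp_hasDerivAt (f := fun s => (s, x)) t
      ((hasDerivAt_id t).prodMk (hasDerivAt_const t x))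
  have space_deriv : HasFDerivAt (fun y => f (t, y))
      ((fderiv 𝕜 f (t, x)).comp (.inr 𝕜 𝕜 E)) x :=
    hf.hasFDerivAt.comp x (hasFDerivAt_prodMk_right t x)
  rw [time_deriv.deriv, space_deriv.fderiv, ContinuousLinearMap.comp_apply,
    ContinuousLinearMap.inr_apply, ← map_add, Prod.mk_add_mk, add_zero, zero_add]

theorem hasDerivAt_along_curve {f : 𝕜 × E → F} {γ : 𝕜 → E} {t : 𝕜} {v : E} {f' : F}
    (hf : DifferentiableAt 𝕜 f (t, γ t)) (hγ : HasDerivAt γ v t)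
    (hft : HasDerivAt (fun s => f (s, γ t)) f' t) :
    HasDerivAt (fun s => f (s, γ s)) (f' + fderiv 𝕜 (fun y => f (t, y)) (γ t) v) t := by
  rw [← hft.deriv, ← fderiv_apply_one_prodMk hf]
  exact hf.hasFDerivAt.comp_hasDerivAt (f := fun s => (s, γ s)) t ((hasDerivAt_id t).prodMk hγ)

end ChainRule

theorem smul_sum_smul_add_sum_mul_smul {ι R M : Type*} [CommSemiring R] [AddCommMonoid M]
    [Module R M] (s : Finset ι) (p : R) (a b : ι → R) (v : ι → M) :
    p • ∑ j ∈ s, a j • v j + ∑ j ∈ s, (a j * b j) • v j =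
      ∑ j ∈ s, (a j * (p + b j)) • v j := by
  simp only [Finset.smul_sum, smul_smul, ← Finset.sum_add_distrib, ← add_smul, mul_add,
    mul_comm p]

section Attention

variable {ι E : Type*} [NormedAddCommGroup E] [InnerProductSpace ℝ E]

/-- The unnormalized softmax attention weight `exp ⟨x, A y⟩`, for an operator `A` on an arbitrary
real inner product space; it yields both `M_{ij} = attentionKernel A X_i X_j` and the summands of
`S(t, x)`. -/
def attentionKernel (A : E →ₗ[ℝ] E) (x y : E) : ℝ :=
  Real.exp ⟪x, A y⟫

theorem attentionKernel_comm {A : E →ₗ[ℝ] E} (hA : A.IsSymmetric) (x y : E) :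
    attentionKernel A x y = attentionKernel A y x := by
  rw [attentionKernel, attentionKernel, ← hA x y, real_inner_comm]

variable [Fintype ι]

/-- The softmax normalization `∑_k exp ⟨x, A z_k⟩` of the particle configuration `z`, seen from
`x`. The variable point is the left argument, so `D_i = attentionMass A X X_i`, while `S(t, x)` has
it on the right. -/
def attentionMass (A : E →ₗ[ℝ] E) (z : ι → E) (x : E) : ℝ :=
  ∑ k, attentionKernel A x (z k)

theorem sum_attentionKernel_eq_attentionMass {A : E →ₗ[ℝ] E} (hA : A.IsSymmetric) (z : ι → E)
    (x : E) : ∑ j, attentionKernel A (z j) x = attentionMass A z x :=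
  Finset.sum_congr rfl fun j _ => attentionKernel_comm hA (z j) x

/-- The particle number `N` enters only as a scaling constant, here an arbitrary `c`. -/
theorem stmt13_general {A : E →ₗ[ℝ] E} (hA : A.IsSymmetric) (B : E → E) (c : ℝ) (α : ℝ → ℝ)
    {W : ℝ × E → E} {X : ι → ℝ → E} {i : ι} {t : ℝ}
    (hW : DifferentiableAt ℝ W (t, X i t))
    (hX : HasDerivAt (X i)
      ((c / attentionMass A (X · t) (X i t)) • B (W (t, X i t))) t)
    (hdtW : HasDerivAt (fun s => W (s, X i t))
      (-(α t) • W (t, X i t)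
        - fderiv ℝ (fun y => W (t, y)) (X i t)
            ((c / ∑ j, attentionKernel A (X j t) (X i t)) • B (W (t, X i t)))
        + (c / (2 * (∑ j, attentionKernel A (X j t) (X i t)) ^ 2)
              * ⟪W (t, X i t), B (W (t, X i t))⟫) •
            ∑ j, attentionKernel A (X j t) (X i t) • A (X j t)
        + (c / 2) • ∑ j, (attentionKernel A (X j t) (X i t) *
            (⟪W (t, X j t), B (W (t, X j t))⟫ / attentionMass A (X · t) (X j t) ^ 2 + 2)) •
              A (X j t)) t) :
    HasDerivAt (fun s => W (s, X i s))
      (-(α t) • W (t, X i t)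
        + (c / 2) • ∑ j, (attentionKernel A (X i t) (X j t) *
            (⟪W (t, X i t), B (W (t, X i t))⟫ / attentionMass A (X · t) (X i t) ^ 2
              + ⟪W (t, X j t), B (W (t, X j t))⟫ / attentionMass A (X · t) (X j t) ^ 2 + 2)) •
              A (X j t)) t := by
  rw [sum_attentionKernel_eq_attentionMass hA (X · t)] at hdtW
  simp only [attentionKernel_comm hA _ (X i t)] at hdtW
  convert hasDerivAt_along_curve hW hX hdtW using 1
  simp only [add_assoc (_ / _), ← smul_sum_smul_add_sum_mul_smul]
  module

end Attention

/-- Proposition 6.2: the deterministic inertial interacting particle system associated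
to the accelerated softmax attention PDE. The curves `Y_i(t) = W(t, X_i(t))` satisfy
`Y_i' = −α Y_i + (N/2) Σ_j M_{ij} (‖Y_i‖²_B/D_i² + ‖Y_j‖²_B/D_j² + 2) A X_j`,
the Jacobian terms cancelling by the chain rule since `X_i' = N B Y_i / D_i`. -/
theorem stmt13 {d N : ℕ} (hd : 1 ≤ d) (hN : 1 ≤ N)
    (A : Matrix (Fin d) (Fin d) ℝ) (hA : A.IsSymm)
    (B : Matrix (Fin d) (Fin d) ℝ) (α : ℝ → ℝ)
    (W : ℝ × EuclideanSpace ℝ (Fin d) → EuclideanSpace ℝ (Fin d))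
    (hW : ContDiff ℝ 1 W)
    (X : Fin N → ℝ → EuclideanSpace ℝ (Fin d))
    (hX : ∀ (i : Fin N) (t : ℝ), HasDerivAt (X i)
      (((N : ℝ) / Dfun A X i t) • mv B (W (t, X i t))) t)
    (hdtW : ∀ (t : ℝ) (x : EuclideanSpace ℝ (Fin d)),
      HasDerivAt (fun s => W (s, x))
        (-(α t) • W (t, x)
          - (fderiv ℝ (fun y => W (t, y)) x)
              (((N : ℝ) / Sfun A X t x) • mv B (W (t, x)))
          + ((N : ℝ) / (2 * (Sfun A X t x) ^ 2) * nB B (W (t, x))) •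
              ∑ j : Fin N, Real.exp ⟪X j t, mv A x⟫ • mv A (X j t)
          + ((N : ℝ) / 2) •
              ∑ j : Fin N, (Real.exp ⟪X j t, mv A x⟫ *
                (nB B (W (t, X j t)) / (Dfun A X j t) ^ 2 + 2)) • mv A (X j t)) t) :
    ∀ (i : Fin N) (t : ℝ),
      HasDerivAt (fun s => W (s, X i s))
        (-(α t) • W (t, X i t)
          + ((N : ℝ) / 2) •
              ∑ j : Fin N, (Mfun A X i j t *
                (nB B (W (t, X i t)) / (Dfun A X i t) ^ 2 +
                  nB B (W (t, X j t)) / (Dfun A X j t) ^ 2 + 2)) • mv A (X j t)) t := by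
  have hA' : (toEuclideanLin A).IsSymmetric :=
    isSymmetric_toEuclideanLin_iff.mpr (isHermitian_iff_isSymm.mpr hA)
  exact fun i t =>
    stmt13_general hA' (mv B) N α (hW.differentiable one_ne_zero _) (hX i t) (hdtW t (X i t))

end
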